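/- Let f¹, …, f^T : S → ℝ be convex differentiable functions on a closed convex set S ⊆ ℝ^d with ‖∇f^t(x)‖ ≤ G for all t and x ∈ S, and let D bound the diameter of S. Define x^{t+1} = Π_S(x^t − η∇f^t(x^t)) with step size η = D/(G√T), where Π_S is Euclidean projection onto S. Then Σ_{t=1}^T f^t(x^t) ≤ min_{x∈S} Σ_{t=1}^T f^t(x) + DG√T. -/

import Mathlib

open Finset

/-- First-order lower bound for a convex function at a point where it has a gradient. -/
theorem ConvexOn.inner_gradient_le_sub {E : Type*} [NormedAddCommGroup E] [InnerProductSpace ℝ E]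
    [CompleteSpace E] {S : Set E} {f : E → ℝ} {g x y : E} (hf : ConvexOn ℝ S f)
    (hg : HasGradientAt f g x) (hx : x ∈ S) (hy : y ∈ S) :
    inner ℝ g (y - x) ≤ f y - f x := by
  have hline : HasDerivAt (f ∘ AffineMap.lineMap x y) (inner ℝ g (y - x)) (0 : ℝ) := by
    have hg' : HasFDerivAt f (InnerProductSpace.toDual ℝ E g)
        (AffineMap.lineMap x y (0 : ℝ)) := by
      simpa using hg.hasFDerivAt
    simpa using hg'.comp_hasDerivAt (0 : ℝ) AffineMap.hasDerivAt_lineMap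
  have h := (hf.comp_affineMap (AffineMap.lineMap x y)).le_slope_of_hasDerivAt
    (by simpa using hx) (by simpa using hy) zero_lt_one hline
  simpa [slope_def_field] using h

/-- A nearest point of a convex set to `u` is at least as close as `u` to every point of the
set. -/
theorem Convex.norm_sub_le_of_forall_dist_le {E : Type*} [NormedAddCommGroup E]
    [InnerProductSpace ℝ E] {S : Set E} (hS : Convex ℝ S) {u p y : E} (hp : p ∈ S)
    (hmin : ∀ w ∈ S, dist p u ≤ dist w u) (hy : y ∈ S) : ‖p - y‖ ≤ ‖u - y‖ := by
  have : Nonempty S := ⟨⟨p, hp⟩⟩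
  have hinf : ‖u - p‖ = ⨅ w : S, ‖u - w‖ := by
    refine le_antisymm (le_ciInf fun w => ?_) ?_
    · simpa only [dist_eq_norm, norm_sub_rev] using hmin w w.2
    · exact ciInf_le (f := fun w : S => ‖u - w‖)
        ⟨0, by rintro _ ⟨w, rfl⟩; exact norm_nonneg _⟩ ⟨p, hp⟩
  have hobtuse := (norm_eq_iInf_iff_real_inner_le_zero hS hp).1 hinf y hy
  have hsq : ‖u - y‖ ^ 2 = ‖u - p‖ ^ 2 - 2 * inner ℝ (u - p) (y - p) + ‖p - y‖ ^ 2 := by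
    rw [norm_sub_rev p y, ← norm_sub_sq_real, sub_sub_sub_cancel_right]
  refine le_of_sq_le_sq ?_ (norm_nonneg _)
  nlinarith [sq_nonneg ‖u - p‖]

/-- One projected gradient step: the regret is controlled by the decrease of the squared distance
to the comparator. -/
theorem ConvexOn.projected_gradient_step {E : Type*} [NormedAddCommGroup E]
    [InnerProductSpace ℝ E] [CompleteSpace E] {S : Set E} {f : E → ℝ} {g x p y : E} {η G : ℝ}
    (hf : ConvexOn ℝ S f) (hg : HasGradientAt f g x) (hG : ‖g‖ ≤ G) (hη : 0 ≤ η)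
    (hx : x ∈ S) (hp : p ∈ S) (hmin : ∀ w ∈ S, dist p (x - η • g) ≤ dist w (x - η • g))
    (hy : y ∈ S) :
    2 * η * (f x - f y) ≤ ‖x - y‖ ^ 2 - ‖p - y‖ ^ 2 + η ^ 2 * G ^ 2 := by
  have hproj := pow_le_pow_left₀ (norm_nonneg _)
    (hf.1.norm_sub_le_of_forall_dist_le hp hmin hy) 2
  have hsq : ‖x - η • g - y‖ ^ 2 = ‖x - y‖ ^ 2 + 2 * η * inner ℝ g (y - x) + η ^ 2 * ‖g‖ ^ 2 := by
    rw [sub_right_comm, norm_sub_sq_real, real_inner_smul_right, norm_smul, mul_pow,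
      Real.norm_eq_abs, sq_abs, real_inner_comm, ← neg_sub x y, inner_neg_right]
    ring
  have hfirst := mul_le_mul_of_nonneg_left (hf.inner_gradient_le_sub hg hx hy)
    (mul_nonneg zero_le_two hη)
  have hbound := mul_le_mul_of_nonneg_left (pow_le_pow_left₀ (norm_nonneg g) hG 2) (sq_nonneg η)
  linarith

/-- Online gradient descent regret bound (Zinkevich). With bounded
gradients `‖∇fᵗ‖ ≤ G`, diameter bound `D`, step size `η = D/(G√T)`, and iterates
obtained by projected gradient steps, `Σₜ fᵗ(xᵗ) ≤ min_{x∈S} Σₜ fᵗ(x) + DG√T`. -/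
theorem stmt_12
    (d : ℕ) (S : Set (EuclideanSpace ℝ (Fin d)))
    (hSne : S.Nonempty) (hSclosed : IsClosed S) (hSconvex : Convex ℝ S)
    (D G : ℝ) (hD : 0 < D) (hG : 0 < G)
    (hdiam : ∀ x ∈ S, ∀ y ∈ S, dist x y ≤ D)
    (T : ℕ) (hT : 1 ≤ T)
    (f : ℕ → EuclideanSpace ℝ (Fin d) → ℝ)
    (hconv : ∀ t, ConvexOn ℝ S (f t))
    (g : ℕ → EuclideanSpace ℝ (Fin d) → EuclideanSpace ℝ (Fin d))
    (hgrad : ∀ t x, HasGradientAt (f t) (g t x) x)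
    (hGbound : ∀ t, ∀ x ∈ S, ‖g t x‖ ≤ G)
    (η : ℝ) (hη : η = D / (G * Real.sqrt T))
    (x : ℕ → EuclideanSpace ℝ (Fin d)) (hx1 : x 1 ∈ S)
    -- x^{t+1} = Π_S(x^t − η ∇f^t(x^t)): the Euclidean projection onto S
    (hproj : ∀ t, x (t + 1) ∈ S ∧
      ∀ y ∈ S, dist (x (t + 1)) (x t - η • g t (x t)) ≤ dist y (x t - η • g t (x t))) :
    ∀ y ∈ S, ∑ t ∈ Finset.Icc 1 T, f t (x t) ≤
      (∑ t ∈ Finset.Icc 1 T, f t y) + D * G * Real.sqrt T := by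
  intro y hy
  have hxS : ∀ t, x (t + 1) ∈ S := fun t => (hproj t).1
  have hTpos : 0 < Real.sqrt T := Real.sqrt_pos.2 (by exact_mod_cast hT)
  have hηpos : 0 < η := by rw [hη]; positivity
  have htelescope : ∀ n : ℕ, 2 * η * (∑ t ∈ Finset.Icc 1 n, f t (x t) -
      ∑ t ∈ Finset.Icc 1 n, f t y) ≤
      ‖x 1 - y‖ ^ 2 - ‖x (n + 1) - y‖ ^ 2 + n * (η ^ 2 * G ^ 2) := by
    intro n
    induction n with
    | zero => simp
    | succ n ih =>
      have hstep := (hconv (n + 1)).projected_gradient_step (hgrad _ _)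
        (hGbound _ _ (hxS n)) hηpos.le (hxS n) (hproj (n + 1)).1 (hproj (n + 1)).2 hy
      rw [Finset.sum_Icc_succ_top (by omega), Finset.sum_Icc_succ_top (by omega)]
      push_cast
      linarith
  have hinit : ‖x 1 - y‖ ^ 2 ≤ D ^ 2 :=
    pow_le_pow_left₀ (norm_nonneg _) (dist_eq_norm (x 1) y ▸ hdiam _ hx1 _ hy) 2
  have hηG : η * (G * Real.sqrt T) = D := by rw [hη]; field_simp
  have hTη : (T : ℝ) * (η ^ 2 * G ^ 2) = D ^ 2 := by
    rw [← hηG, mul_pow, mul_pow, Real.sq_sqrt (Nat.cast_nonneg T)]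
    ring
  have hDη : 2 * η * (D * G * Real.sqrt T) = 2 * D ^ 2 := by
    linear_combination 2 * D * hηG
  have hregret : ∑ t ∈ Finset.Icc 1 T, f t (x t) - ∑ t ∈ Finset.Icc 1 T, f t y ≤
      D * G * Real.sqrt T := by
    refine le_of_mul_le_mul_left ?_ (mul_pos zero_lt_two hηpos)
    linarith [htelescope T, sq_nonneg ‖x (T + 1) - y‖]
  linarith
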